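/- Let φ : A → B be a flat local morphism of Noetherian local rings with edim(A) ≥ edim(B), and M a finite B-module that is free as an A-module. Then M is free over B and edim(A) = edim(B). -/

import Mathlib

open IsLocalRing

/-- The embedding dimension of a local ring: the minimal number of generators of its
maximal ideal. -/
noncomputable def edim (A : Type) [CommRing A] [IsLocalRing A] : ℕ :=
  sInf {k : ℕ | ∃ y : Fin k → A, Ideal.span (Set.range y) = maximalIdeal A}

/-!
Minimal generators `x` of the maximal ideal of `A` are independent in the sense of Lech: the
coefficients of a relation `∑ xᵢ uᵢ = 0` lie in `(x)`. By flatness this passes to `M`, and to the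
terms of the Koszul complex `K(y; M)`, where `y` is a generating family of the maximal ideal of `B`.
As `xᵢ ∈ (y)`, multiplication by `xᵢ` on `K(y; M)` is homotopic to zero, by exterior multiplication
by a vector `fᵢ` with `y(fᵢ) = xᵢ`. If `y` has at most as many members as `x`, the product of all
the `fᵢ` kills the cycles of degree one; removing the factors one by one with the help of Lech
independence shows that such a cycle is a boundary up to `(x) K(y; M)`. Hence each class in
`Tor₁(B/(y), M) = ker((y) ⊗ M → M)` is of the form `∑ xᵢ ⊗ uᵢ` with `∑ xᵢ uᵢ = 0` in `M`, and
this vanishes by flatness of `M` over `A`; so `M` is free over `B`. If `y` has fewer members than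
`x`, the same argument in degree zero gives `M = (y) M`, hence `M = 0`;
with `B` in place of `M` this excludes `edim B < edim A`.
-/

open TensorProduct

section LechIndependent

variable {R ι : Type*} [CommRing R] [Fintype ι] {x : ι → R}
  {M N : Type*} [AddCommGroup M] [Module R M] [AddCommGroup N] [Module R N]

/-- A finite family `x` is independent on `M` in the sense of Lech if the coefficients of every
linear relation `∑ i, x i • u i = 0` lie in `(x) M`, that is, are combinations of the `x k`. -/
def LechIndependent (x : ι → R) (M : Type*) [AddCommGroup M] [Module R M] : Prop :=
  ∀ u : ι → M, ∑ i, x i • u i = 0 → ∀ i, ∃ v : ι → M, u i = ∑ k, x k • v k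

namespace LechIndependent

lemma of_linearEquiv (hx : LechIndependent x M) (e : M ≃ₗ[R] N) : LechIndependent x N := by
  intro u hu i
  obtain ⟨v, hv⟩ := hx (fun k => e.symm (u k)) (by simp [← map_smul, ← map_sum, hu]) i
  exact ⟨fun k => e (v k), by simpa using congrArg e hv⟩

lemma of_flat [Module.Flat R M] (hx : LechIndependent x R) : LechIndependent x M := by
  intro u hu i
  obtain ⟨_, a, z, huz, ha⟩ := Module.Flat.isTrivialRelation_of_sum_smul_eq_zero hu
  choose b hb using fun j => hx (a · j) (ha j) i
  refine ⟨fun k => ∑ j, b j k • z j, ?_⟩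
  simp only [huz, hb, Finset.sum_smul, Finset.smul_sum, smul_assoc]
  exact Finset.sum_comm

variable {S : Type*} [CommRing S] [Algebra R S] [Module S M] [IsScalarTower R S M]

lemma algebraMap_comp (hx : LechIndependent x M) : LechIndependent (algebraMap R S ∘ x) M := by
  simpa only [LechIndependent, Function.comp_apply, algebraMap_smul] using hx

lemma tensorProduct_of_flat [Module.Flat R M] (hx : LechIndependent x R)
    (E : Type*) [AddCommGroup E] [Module S E] [Module.Free S E] :
    LechIndependent (algebraMap R S ∘ x) (E ⊗[S] M) := by
  classical
  let b := Module.Free.chooseBasis S E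
  have : Module.Flat R (Module.Free.ChooseBasisIndex S E →₀ M) :=
    .of_linearEquiv (finsuppLEquivDirectSum R M _)
  exact hx.of_flat.algebraMap_comp.of_linearEquiv
    (TensorProduct.equivFinsuppOfBasisLeft b).symm

end LechIndependent

end LechIndependent

section Homotopy

variable {R ι T : Type*} [CommRing R] [Fintype ι] {x : ι → R} [AddCommGroup T] [Module R T]
  {d : Module.End R T} {e : ι → Module.End R T} {w : T}

lemma exists_apply_prod_eq_sum_smul (hde : ∀ i t, d (e i t) = x i • t - e i (d t)) (hw : d w = 0)
    (l : List ι) :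
    ∃ g : ι → T, (∀ k ∉ l, g k = 0) ∧ d ((l.map e).prod w) = ∑ k, x k • g k := by
  classical
  induction l with
  | nil => exact ⟨0, by simp, by simp [hw]⟩
  | cons i l ih =>
    obtain ⟨g, hgl, hg⟩ := ih
    refine ⟨Pi.single i ((l.map e).prod w) - fun k => e i (g k), fun k hk => ?_, ?_⟩
    · rw [List.mem_cons, not_or] at hk
      simp [hk.1, hgl k hk.2]
    · simp [hde, hg, smul_sub, Finset.sum_sub_distrib, Pi.single_apply]

lemma exists_eq_add_sum_smul_of_prod (hx : LechIndependent x T) (hdd : ∀ t, d (d t) = 0)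
    (hde : ∀ i t, d (e i t) = x i • t - e i (d t)) (hw : d w = 0) (l : List ι) (hl : l.Nodup)
    (h : ∃ (t : T) (v : ι → T), (l.map e).prod w = d t + ∑ k, x k • v k) :
    ∃ (t : T) (v : ι → T), w = d t + ∑ k, x k • v k := by
  -- Applying `d` to the hypothesis for `i :: l` gives a relation between the `x k`; since `g` is
  -- supported on `l`, its coefficient at `i` is the product over `l` minus `d (v i)`.
  classical
  induction l with
  | nil => simpa using h
  | cons i l ih =>
    rw [List.nodup_cons] at hl
    obtain ⟨t, v, htv⟩ := h
    obtain ⟨g, hgl, hg⟩ := exists_apply_prod_eq_sum_smul hde hw l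
    have hrel : x i • (l.map e).prod w - ∑ k, x k • e i (g k) = ∑ k, x k • d (v k) := by
      simpa [hde, hg, hdd] using congrArg d htv
    obtain ⟨v', hv'⟩ := hx
      (Pi.single i ((l.map e).prod w) - (fun k => e i (g k)) - fun k => d (v k))
      (by simp [smul_sub, Finset.sum_sub_distrib, Pi.single_apply, hrel]) i
    refine ih hl.2 ⟨v i, v', ?_⟩
    rw [← hv']
    simp [hgl i hl.1]

end Homotopy

section Koszul

variable {R F : Type*} [CommRing R] [AddCommGroup F] [Module R F]

/-- The differential of the Koszul complex of a linear form `y`, as an endomorphism of the whole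
(ungraded) exterior algebra: the antiderivation extending `y`, i.e. contraction by `y`. -/
noncomputable abbrev koszulDifferential (y : Module.Dual R F) :
    Module.End R (ExteriorAlgebra R F) :=
  CliffordAlgebra.contractLeft y

open ExteriorAlgebra

lemma ιInv_algebraMap (r : R) : ιInv (algebraMap R (ExteriorAlgebra R F) r) = 0 := by
  simp [ιInv, TrivSqZeroExt.algebraMap_eq_inl]

lemma ιInv_ι_mul (v : F) (a : ExteriorAlgebra R F) : ιInv (ι R v * a) = algebraMapInv a • v := by
  -- the right module structure on which the definition of `ιInv` relies
  let : Module Rᵐᵒᵖ F := Module.compHom _ ((RingHom.id R).fromOpposite mul_comm)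
  have : IsCentralScalar R F := ⟨fun _ _ => rfl⟩
  have hfst : (TrivSqZeroExt.fstHom R R F).comp toTrivSqZeroExt = algebraMapInv := by
    ext v
    simp [algebraMapInv]
  simp [ιInv, ← hfst]

variable (y : Module.Dual R F)

lemma algebraMapInv_koszulDifferential (a : ExteriorAlgebra R F) :
    algebraMapInv (koszulDifferential y a) = y (ιInv a) := by
  induction a using CliffordAlgebra.left_induction with
  | algebraMap r => simp [ιInv_algebraMap]
  | add a b ha hb => simp only [map_add, ha, hb]
  | ι_mul a v _ => simp [ιInv_ι_mul, CliffordAlgebra.contractLeft_ι_mul, algebraMapInv, mul_comm]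

instance free_exteriorAlgebra [Module.Free R F] : Module.Free R (ExteriorAlgebra R F) := by
  classical
  let b := Module.Free.chooseBasis R F
  let : LinearOrder (Module.Free.ChooseBasisIndex R F) := linearOrderOfSTO WellOrderingRel
  exact .of_basis b.ExteriorAlgebra

lemma prod_map_ι_eq_zero {κ : Type*} [Fintype κ] (b : Module.Basis κ R F)
    {l : List F} (hl : Fintype.card κ < l.length) : (l.map (ι R)).prod = 0 := by
  have hzero : ιMulti R l.length (M := F) = 0 := b.ext_alternating fun v hv =>
    absurd (Fintype.card_le_of_injective v hv) (by simpa using hl)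
  simpa [ιMulti_apply, ← List.ofFn_eq_map, ← Function.comp_def, ← List.map_ofFn]
    using congrArg (· l.get) hzero

variable {M : Type*} [AddCommGroup M] [Module R M]

lemma rTensor_koszulDifferential_ι_smul (v : F) (t : ExteriorAlgebra R F ⊗[R] M) :
    (koszulDifferential y).rTensor M (ι R v • t) =
      y v • t - ι R v • (koszulDifferential y).rTensor M t := by
  induction t with
  | zero => simp
  | add s t hs ht => simp only [smul_add, map_add, hs, ht]; abel
  | tmul a z => simp [smul_tmul', CliffordAlgebra.contractLeft_ι_mul, sub_tmul]

lemma rTensor_koszulDifferential_rTensor_koszulDifferential (t : ExteriorAlgebra R F ⊗[R] M) :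
    (koszulDifferential y).rTensor M ((koszulDifferential y).rTensor M t) = 0 := by
  rw [← LinearMap.rTensor_comp_apply]
  have : koszulDifferential y ∘ₗ koszulDifferential y = 0 :=
    LinearMap.ext (CliffordAlgebra.contractLeft_contractLeft y)
  simp [this]

lemma prod_map_ι_smul_rTensor_ι {κ : Type*} [Fintype κ] (b : Module.Basis κ R F) {l : List F}
    (hl : Fintype.card κ ≤ l.length) (w : F ⊗[R] M) :
    (l.map (ι R)).prod • (ι R).rTensor M w = 0 := by
  induction w with
  | zero => simp
  | add s t hs ht => rw [map_add, smul_add, hs, ht, add_zero]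
  | tmul r z =>
    have := prod_map_ι_eq_zero b (l := l ++ [r]) (by simpa using Nat.lt_succ_of_le hl)
    rw [List.map_append, List.prod_append, List.map_singleton, List.prod_singleton] at this
    simp [smul_tmul', this]

theorem exists_rTensor_eq_sum_smul {ι : Type*} [Fintype ι] {x : ι → R}
    (hx : LechIndependent x (ExteriorAlgebra R F ⊗[R] M))
    {y : Module.Dual R F} (hxy : ∀ i, x i ∈ LinearMap.range y)
    {N : Type*} [AddCommGroup N] [Module R N] {q : ExteriorAlgebra R F →ₗ[R] N}
    (hq : ∀ a, q (koszulDifferential y a) = 0)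
    {w : ExteriorAlgebra R F ⊗[R] M} (hw : (koszulDifferential y).rTensor M w = 0)
    (hprod : ∀ l : List F, l.length = Fintype.card ι → (l.map (ExteriorAlgebra.ι R)).prod • w = 0) :
    ∃ v : ι → N ⊗[R] M, q.rTensor M w = ∑ i, x i • v i := by
  choose f hf using hxy
  let e (i : ι) : Module.End R (ExteriorAlgebra R F ⊗[R] M) :=
    Algebra.lsmul R R _ (ExteriorAlgebra.ι R (f i))
  have he : (Finset.univ.toList.map e).prod w = 0 := by
    have hmap : Finset.univ.toList.map e =
        ((Finset.univ.toList.map f).map (ExteriorAlgebra.ι R)).map (Algebra.lsmul R R _) := by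
      simp [e, Function.comp_def]
    rw [hmap, ← map_list_prod]
    exact hprod _ (by simp)
  obtain ⟨t, v, rfl⟩ := exists_eq_add_sum_smul_of_prod (e := e) hx
    (rTensor_koszulDifferential_rTensor_koszulDifferential y)
    (fun i t => by simpa [e, hf] using rTensor_koszulDifferential_ι_smul y (f i) t) hw
    Finset.univ.toList (Finset.nodup_toList _) ⟨0, 0, by simpa using he⟩
  have hqd : q ∘ₗ koszulDifferential y = 0 := LinearMap.ext hq
  exact ⟨fun i => q.rTensor M (v i), by simp [← LinearMap.rTensor_comp_apply, hqd]⟩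

end Koszul

section Tensor

variable {R P : Type*} [CommRing R] [AddCommGroup P] [Module R P] {J : Ideal R} {r : R}

-- For `τ` in the kernel of `J ⊗ P → P` this says that `J` annihilates `Tor₁(R ⧸ J, P)`.
lemma smul_eq_tmul_lid_rTensor_subtype (hr : r ∈ J) (τ : J ⊗[R] P) :
    r • τ = (⟨r, hr⟩ : J) ⊗ₜ[R] TensorProduct.lid R P (J.subtype.rTensor P τ) := by
  induction τ with
  | zero => simp
  | add s t hs ht => simp only [smul_add, map_add, hs, ht, tmul_add]
  | tmul a z =>
    have : r • a = (a : R) • (⟨r, hr⟩ : J) := Subtype.ext (mul_comm r a)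
    simp [smul_tmul', this]

lemma smul_quotient_tensorProduct_eq_zero (hr : r ∈ J) (τ : (R ⧸ J) ⊗[R] P) : r • τ = 0 := by
  induction τ with
  | zero => simp
  | add s t hs ht => rw [smul_add, hs, ht, add_zero]
  | tmul a z =>
    simp [smul_tmul', Algebra.smul_def, Ideal.Quotient.eq_zero_iff_mem.mpr hr]

end Tensor

section Flat

variable {A B M : Type*} [CommRing A] [CommRing B] [Algebra A B] [AddCommGroup M] [Module A M]
  [Module B M] [IsScalarTower A B M] [Module.Flat A M] {ι : Type*} [Fintype ι] {x : ι → A}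

lemma sum_tmul_eq_zero {N : Type*} [AddCommGroup N] [Module A N] [Module B N] [IsScalarTower A B N]
    {n : ι → N} (hn : ∀ a : ι → A, ∑ i, x i * a i = 0 → ∑ i, a i • n i = 0)
    {u : ι → M} (hu : ∑ i, x i • u i = 0) :
    ∑ i, n i ⊗ₜ[B] u i = 0 := by
  obtain ⟨_, a, z, huz, ha⟩ := Module.Flat.isTrivialRelation_of_sum_smul_eq_zero hu
  simp_rw [huz, tmul_sum, ← smul_tmul]
  rw [Finset.sum_comm]
  simp [← sum_tmul, hn _ (ha _)]

lemma sum_smul_eq_zero_of_rTensor_subtype {J : Ideal B} (hxJ : ∀ i, algebraMap A B (x i) ∈ J)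
    {v : ι → J ⊗[B] M} (hv : J.subtype.rTensor M (∑ i, algebraMap A B (x i) • v i) = 0) :
    ∑ i, algebraMap A B (x i) • v i = 0 := by
  simp_rw [smul_eq_tmul_lid_rTensor_subtype (hxJ _)]
  refine sum_tmul_eq_zero (x := x) (fun a ha => Subtype.ext ?_) ?_
  · simpa [mul_comm, Algebra.smul_def] using congrArg (algebraMap A B) ha
  · simp_rw [← algebraMap_smul B (x _), ← map_smul, ← map_sum, hv, map_zero]

variable {F κ : Type*} [AddCommGroup F] [Module B F] [Fintype κ] {y : Module.Dual B F}

open ExteriorAlgebra in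
theorem rTensor_subtype_range_injective (hx : LechIndependent x A) (b : Module.Basis κ B F)
    (hcard : Fintype.card κ ≤ Fintype.card ι)
    (hxy : ∀ i, algebraMap A B (x i) ∈ LinearMap.range y) :
    Function.Injective ((LinearMap.range y).subtype.rTensor M) := by
  have := Module.Free.of_basis b
  rw [injective_iff_map_eq_zero]
  intro τ hτ
  obtain ⟨w, rfl⟩ := LinearMap.rTensor_surjective M y.surjective_rangeRestrict τ
  have hdw : (koszulDifferential y).rTensor M ((ExteriorAlgebra.ι B).rTensor M w) = 0 := by
    have hdι : koszulDifferential y ∘ₗ ExteriorAlgebra.ι B =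
        Algebra.linearMap B _ ∘ₗ (LinearMap.range y).subtype ∘ₗ y.rangeRestrict :=
      LinearMap.ext fun r => CliffordAlgebra.contractLeft_ι (Q := 0) y r
    rw [← LinearMap.rTensor_comp_apply, hdι, LinearMap.rTensor_comp_apply,
      LinearMap.rTensor_comp_apply, hτ, map_zero]
  have hq (a) : (y.rangeRestrict ∘ₗ ιInv) (koszulDifferential y a) = 0 :=
    Subtype.ext <| by
      simp [← algebraMapInv_koszulDifferential, CliffordAlgebra.contractLeft_contractLeft]
  have hqι : (y.rangeRestrict ∘ₗ ιInv) ∘ₗ ExteriorAlgebra.ι B = y.rangeRestrict :=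
    LinearMap.ext fun r => congrArg y.rangeRestrict (ι_leftInverse r)
  obtain ⟨v, hv⟩ := exists_rTensor_eq_sum_smul (hx.tensorProduct_of_flat (M := M) _) hxy hq hdw
    fun l hl => prod_map_ι_smul_rTensor_ι b (hl ▸ hcard) w
  rw [← LinearMap.rTensor_comp_apply, hqι] at hv
  rw [hv] at hτ ⊢
  exact sum_smul_eq_zero_of_rTensor_subtype hxy hτ

theorem range_smul_top_eq_top (hx : LechIndependent x A) (b : Module.Basis κ B F)
    (hcard : Fintype.card κ < Fintype.card ι)
    (hxy : ∀ i, algebraMap A B (x i) ∈ LinearMap.range y) :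
    (LinearMap.range y : Ideal B) • (⊤ : Submodule B M) = ⊤ := by
  have := Module.Free.of_basis b
  set J : Ideal B := LinearMap.range y
  refine Submodule.eq_top_iff'.mpr fun z => ?_
  have hq (a) :
      (J.mkQ ∘ₗ ExteriorAlgebra.algebraMapInv.toLinearMap) (koszulDifferential y a) = 0 := by
    simp [algebraMapInv_koszulDifferential, J, Ideal.Quotient.eq_zero_iff_mem]
  obtain ⟨v, hv⟩ := exists_rTensor_eq_sum_smul (hx.tensorProduct_of_flat (M := M) _) hxy hq
    (w := 1 ⊗ₜ z) (by simp)
    (fun l hl => by simp [prod_map_ι_eq_zero b (hl ▸ hcard)])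
  have hz : (1 : B ⧸ J) ⊗ₜ[B] z = 0 := by
    simpa [smul_quotient_tensorProduct_eq_zero (hxy _)] using hv
  simpa using congrArg (quotTensorEquivQuotSMul M J) hz

end Flat

section edim

variable {A : Type} [CommRing A] [IsLocalRing A]

lemma exists_span_range_eq_maximalIdeal (hA : (maximalIdeal A).FG) :
    ∃ x : Fin (edim A) → A, Ideal.span (Set.range x) = maximalIdeal A :=
  Nat.sInf_mem (s := {k | ∃ x : Fin k → A, Ideal.span (Set.range x) = maximalIdeal A})
    (Submodule.fg_iff_exists_fin_generating_family.mp hA)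

lemma span_range_comp_succAbove {R : Type*} [CommRing R] {n : ℕ} {x a : Fin (n + 1) → R}
    (h : ∑ i, x i * a i = 0) {l : Fin (n + 1)} (hl : IsUnit (a l)) :
    Ideal.span (Set.range (x ∘ l.succAbove)) = Ideal.span (Set.range x) := by
  refine le_antisymm (Ideal.span_mono (Set.range_comp_subset_range _ _)) ?_
  rw [Ideal.span_le, Set.range_subset_iff, Fin.forall_iff_succAbove l]
  refine ⟨?_, fun j => Ideal.subset_span ⟨j, rfl⟩⟩
  rw [Fin.sum_univ_succAbove _ l] at h
  rw [SetLike.mem_coe, ← Ideal.mul_unit_mem_iff_mem _ hl, eq_neg_of_add_eq_zero_left h]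
  exact neg_mem (sum_mem fun j _ => Ideal.mul_mem_right _ _ (Ideal.subset_span ⟨j, rfl⟩))

lemma lechIndependent_of_span_range_eq_maximalIdeal {n : ℕ} (hn : n = edim A) {x : Fin n → A}
    (hx : Ideal.span (Set.range x) = maximalIdeal A) : LechIndependent x A := by
  intro a ha l
  suffices a l ∈ Ideal.span (Set.range x) by
    obtain ⟨c, hc⟩ := Ideal.mem_span_range_iff_exists_fun.mp this
    exact ⟨c, by simp [← hc, mul_comm]⟩
  rw [hx, mem_maximalIdeal]
  intro hl
  obtain _ | n := n
  · exact l.elim0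
  have : edim A ≤ n := Nat.sInf_le ⟨_, (span_range_comp_succAbove ha hl).trans hx⟩
  omega

end edim

theorem desmit_flat_general
    {A B : Type} {M : Type*} [CommRing A] [IsLocalRing A] [IsNoetherianRing A]
    [CommRing B] [IsLocalRing B] [IsNoetherianRing B]
    [Algebra A B] [IsLocalHom (algebraMap A B)]
    [AddCommGroup M] [Module B M] [Module A M] [IsScalarTower A B M]
    [Module.Finite B M] [Module.Flat A M] (h : edim B ≤ edim A) :
    Module.Free B M ∧ (Nontrivial M → edim A = edim B) := by
  obtain ⟨x, hx⟩ := exists_span_range_eq_maximalIdeal (maximalIdeal A).fg_of_isNoetherianRing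
  obtain ⟨y, hy⟩ := exists_span_range_eq_maximalIdeal (maximalIdeal B).fg_of_isNoetherianRing
  have hrange : LinearMap.range (Fintype.linearCombination B y) = maximalIdeal B :=
    (Fintype.range_linearCombination B y).trans hy
  have hxL : LechIndependent x A := lechIndependent_of_span_range_eq_maximalIdeal rfl hx
  have hxy (i) : algebraMap A B (x i) ∈ LinearMap.range (Fintype.linearCombination B y) := by
    have : x i ∈ maximalIdeal A := hx ▸ Ideal.subset_span ⟨i, rfl⟩
    rw [hrange]
    exact map_nonunit (algebraMap A B) _ this
  refine ⟨?_, fun _ => le_antisymm (not_lt.mp fun hlt => ?_) h⟩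
  · have := Module.finitePresentation_of_finite B M
    refine Module.free_of_maximalIdeal_rTensor_injective (hrange ▸ ?_)
    exact rTensor_subtype_range_injective hxL (Pi.basisFun B _) (by simpa using h) hxy
  · have := range_smul_top_eq_top (M := M) hxL (Pi.basisFun B _) (by simpa using hlt) hxy
    rw [hrange] at this
    exact Submodule.top_ne_ideal_smul_of_le_jacobson_annihilator (maximalIdeal_le_jacobson _)
      this.symm

/-- De Smit's conjecture (flat case): if `A → B` is a flat local morphism of Noetherian
local rings with `edim A ≥ edim B` and `M` is a finite `B`-module which is free over `A`,
then `M` is free over `B` and `edim A = edim B`. -/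
theorem desmit_flat
    {A B M : Type} [CommRing A] [IsLocalRing A] [IsNoetherianRing A]
    [CommRing B] [IsLocalRing B] [IsNoetherianRing B]
    [Algebra A B] [IsLocalHom (algebraMap A B)] [Module.Flat A B]
    [AddCommGroup M] [Module B M] [Module A M] [IsScalarTower A B M]
    [Module.Finite B M] [Module.Free A M]
    (h : edim B ≤ edim A) :
    Module.Free B M ∧ edim A = edim B := by
  exact ⟨(desmit_flat_general h).1, (desmit_flat_general (M := B) h).2 inferInstance⟩
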